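/- Let u₀(x) = ln(1 − ln|x|) on the unit disk B₁(0) ⊂ ℝ². Then u₀ ∈ W^{1,2}(B₁(0)) with ∫_{B₁(0)} |∇u₀|² dx = 2π, and u₀ satisfies −Δu₀ = |∇u₀|² in the sense of distributions on the whole disk B₁(0): for every φ ∈ C_c^∞(B₁(0)), ∫_{B₁(0)} ∇u₀ · ∇φ dx = ∫_{B₁(0)} |∇u₀|² φ dx. Consequently the time-independent function u(t,x) = u₀(x) is a weak solution of ∂ₜu − Δu = |∇u|² on (0,∞)×B₁(0). -/

import Mathlib

open MeasureTheory Set Metric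

noncomputable section

/-- Partial derivative of a scalar function on `ℝ²` in the `i`-th coordinate
direction. -/
def pd (i : Fin 2) (g : EuclideanSpace ℝ (Fin 2) → ℝ) :
    EuclideanSpace ℝ (Fin 2) → ℝ :=
  fun x => fderiv ℝ g x (EuclideanSpace.single i 1)

/-- Time derivative of a function on `ℝ × ℝ²`. -/
def pT (w : ℝ × EuclideanSpace ℝ (Fin 2) → ℝ) :
    ℝ × EuclideanSpace ℝ (Fin 2) → ℝ :=
  fun p => deriv (fun s => w (s, p.2)) p.1


lemma slice_zero (g g' : EuclideanSpace ℝ (Fin 2) → ℝ) (i : Fin 2)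
    (h : ∀ x, x ≠ 0 → HasLineDerivAt ℝ g (g' x) x (EuclideanSpace.single i 1))
    (hg : Integrable g) (hg' : Integrable g') : ∫ x, g' x = 0 := by
  let e : (ℝ × (Fin 1 → ℝ)) ≃ᵐ EuclideanSpace ℝ (Fin 2) :=
    (MeasurableEquiv.piFinSuccAbove (fun _ : Fin 2 => ℝ) i).symm.trans
      (MeasurableEquiv.toLp 2 (Fin 2 → ℝ))
  have he : MeasurePreserving e volume volume :=
    ((volume_preserving_piFinSuccAbove (fun _ : Fin 2 => ℝ) i).symm).trans
      ((EuclideanSpace.volume_preserving_symm_measurableEquiv_toLp (Fin 2)).symm)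
  have hadd : ∀ (t s : ℝ) (y : Fin 1 → ℝ),
      e (t + s, y) = e (t, y) + s • EuclideanSpace.single i (1:ℝ) := by
    intro t s y
    ext j
    simp only [e, MeasurableEquiv.trans_apply, MeasurableEquiv.piFinSuccAbove_symm_apply,
      MeasurableEquiv.coe_toLp, PiLp.add_apply, PiLp.smul_apply]
    refine Fin.succAboveCases i ?_ (fun k => ?_) j
    · simp
    · simp [Fin.succAbove_ne]
  have hne : ∀ (t : ℝ) (y : Fin 1 → ℝ), y ≠ 0 → e (t, y) ≠ 0 := by
    intro t y hy h0
    apply hy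
    ext k
    have := congrArg (fun z : EuclideanSpace ℝ (Fin 2) => z (i.succAbove k)) h0
    simpa [e] using this
  have h1 : Integrable (fun p => g (e p)) (volume.prod volume) :=
    (he.integrable_comp_emb e.measurableEmbedding).2 hg
  have h2 : Integrable (fun p => g' (e p)) (volume.prod volume) :=
    (he.integrable_comp_emb e.measurableEmbedding).2 hg'
  rw [← he.integral_comp' g', Measure.volume_eq_prod, integral_prod_symm _ h2]
  apply integral_eq_zero_of_ae
  have hae : ∀ᵐ y : Fin 1 → ℝ, y ≠ 0 := by
    simp [ae_iff]
  filter_upwards [h1.prod_left_ae, h2.prod_left_ae, hae] with y hy1 hy2 hy0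
  refine integral_eq_zero_of_hasDerivAt_of_integrable (f := fun t => g (e (t, y))) ?_ hy2 hy1
  intro t
  have h3 := h (e (t, y)) (hne t y hy0)
  unfold HasLineDerivAt at h3
  have h4 : HasDerivAt (fun s => g (e (t, y) + s • EuclideanSpace.single i (1:ℝ)))
      (g' (e (t, y))) (t + (-t)) := by simpa using h3
  have h5 := h4.comp_add_const t (-t)
  refine h5.congr_of_eventuallyEq (Filter.Eventually.of_forall fun s => ?_)
  simp only [← hadd]
  ring_nf

lemma weak_ibp (F F' : EuclideanSpace ℝ (Fin 2) → ℝ) (i : Fin 2)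
    (h : ∀ x ∈ ball (0 : EuclideanSpace ℝ (Fin 2)) 1, x ≠ 0 →
      HasLineDerivAt ℝ F (F' x) x (EuclideanSpace.single i 1))
    (hF : IntegrableOn F (ball 0 1)) (hF' : IntegrableOn F' (ball 0 1))
    (φ : EuclideanSpace ℝ (Fin 2) → ℝ) (hφ : ContDiff ℝ (⊤ : ℕ∞) φ)
    (hc : HasCompactSupport φ) (hs : tsupport φ ⊆ ball (0 : EuclideanSpace ℝ (Fin 2)) 1) :
    IntegrableOn (fun x => F' x * φ x) (ball 0 1) ∧
    IntegrableOn (fun x => F x * pd i φ x) (ball 0 1) ∧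
    ∫ x in ball (0 : EuclideanSpace ℝ (Fin 2)) 1, (F' x * φ x + F x * pd i φ x) = 0 := by
  have hdc : Continuous (pd i φ) := by
    unfold pd
    exact (hφ.continuous_fderiv (by simp)).clm_apply continuous_const
  have hpc : HasCompactSupport (pd i φ) := hc.fderiv_apply (𝕜 := ℝ) _
  obtain ⟨C, hC⟩ := hc.exists_bound_of_continuous hφ.continuous
  obtain ⟨C', hC'⟩ := hpc.exists_bound_of_continuous hdc
  have hz : ∀ x, x ∉ ball (0 : EuclideanSpace ℝ (Fin 2)) 1 → φ x = 0 :=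
    fun x hx => image_eq_zero_of_notMem_tsupport fun hx' => hx (hs hx')
  have hz' : ∀ x, x ∉ tsupport φ → pd i φ x = 0 := by
    intro x hx
    have : fderiv ℝ φ x = 0 := by
      apply image_eq_zero_of_notMem_tsupport
      exact fun h' => hx (tsupport_fderiv_subset ℝ h')
    simp [pd, this]
  have i1 : IntegrableOn (fun x => F' x * φ x) (ball 0 1) :=
    Integrable.mul_bdd hF' hφ.continuous.aestronglyMeasurable (Filter.Eventually.of_forall hC)
  have i2 : IntegrableOn (fun x => F x * pd i φ x) (ball 0 1) :=
    Integrable.mul_bdd hF hdc.aestronglyMeasurable (Filter.Eventually.of_forall hC')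
  have i3 : IntegrableOn (fun x => F x * φ x) (ball 0 1) :=
    Integrable.mul_bdd hF hφ.continuous.aestronglyMeasurable (Filter.Eventually.of_forall hC)
  refine ⟨i1, i2, ?_⟩
  have hz2 : ∀ x, x ∉ ball (0 : EuclideanSpace ℝ (Fin 2)) 1 →
      F' x * φ x + F x * pd i φ x = 0 := by
    intro x hx
    rw [hz x hx, hz' x (fun h' => hx (hs h'))]; simp
  rw [setIntegral_eq_integral_of_forall_compl_eq_zero hz2]
  refine slice_zero (fun x => F x * φ x) _ i ?_ ?_ ?_
  · intro x hx
    by_cases hxs : x ∈ tsupport φ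
    · have a1 := h x (hs hxs) hx
      have a2 : HasLineDerivAt ℝ φ (pd i φ x) x (EuclideanSpace.single i 1) :=
        ((hφ.differentiable (by simp)) x).hasFDerivAt.hasLineDerivAt _
      unfold HasLineDerivAt at *
      have a3 := a1.mul a2
      simp only [zero_smul, add_zero] at a3
      exact a3
    · have a1 : (fun x => F x * φ x) =ᶠ[nhds x] fun _ => 0 := by
        filter_upwards [notMem_tsupport_iff_eventuallyEq.1 hxs] with y hy
        simp [hy]
      rw [hz' x hxs, image_eq_zero_of_notMem_tsupport hxs]
      have a2 : HasFDerivAt (fun x => F x * φ x) (0 : EuclideanSpace ℝ (Fin 2) →L[ℝ] ℝ) x :=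
        (hasFDerivAt_const (0:ℝ) x).congr_of_eventuallyEq a1
      simpa using a2.hasLineDerivAt (EuclideanSpace.single i 1)
  · exact (integrableOn_iff_integrable_of_support_subset (fun x hx => by
      by_contra h'; exact hx (by simp [hz x h']))).1 i3
  · exact (integrableOn_iff_integrable_of_support_subset (fun x hx => by
      by_contra h'; exact hx (hz2 x h'))).1 (i1.add i2)


lemma rad_deriv (r : ℝ) (h0 : 0 < r) (h1 : r < 1) :
    HasDerivAt (fun r => 1 / (1 - Real.log r)) (1 / (r * (1 - Real.log r) ^ 2)) r := by
  have hl := Real.log_neg h0 h1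
  have h2 : 1 - Real.log r ≠ 0 := by linarith
  have := (((Real.hasDerivAt_log h0.ne').const_sub 1).inv h2)
  have h3 : -(-r⁻¹) / (1 - Real.log r) ^ 2 = 1 / (r * (1 - Real.log r) ^ 2) := by
    rw [neg_neg]
    field_simp
  rw [h3] at this
  refine this.congr_of_eventuallyEq (Filter.Eventually.of_forall fun y => ?_)
  simp

lemma rad_int : IntegrableOn (fun r : ℝ => 1 / (r * (1 - Real.log r) ^ 2)) (Ioo 0 1) ∧
    ∫ r in Ioo (0:ℝ) 1, 1 / (r * (1 - Real.log r) ^ 2) = 1 := by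
  have t0 : Filter.Tendsto (fun r => 1 / (1 - Real.log r)) (nhdsWithin 0 (Ioi 0)) (nhds 0) := by
    have a : Filter.Tendsto (fun r => 1 - Real.log r) (nhdsWithin 0 (Ioi 0)) Filter.atTop := by
      have := Filter.tendsto_atTop_add_const_left _ (1:ℝ)
        (Filter.tendsto_neg_atBot_atTop.comp Real.tendsto_log_nhdsGT_zero)
      simpa [sub_eq_add_neg] using this
    have b := a.inv_tendsto_atTop
    refine b.congr fun y => ?_
    simp
  have t1 : Filter.Tendsto (fun r => 1 / (1 - Real.log r)) (nhdsWithin 1 (Iio 1)) (nhds 1) := by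
    have : ContinuousAt (fun r => 1 / (1 - Real.log r)) 1 := by
      apply ContinuousAt.div continuousAt_const
      · exact continuousAt_const.sub (Real.continuousAt_log one_ne_zero)
      · simp
    have := this.tendsto.mono_left (nhdsWithin_le_nhds (s := Iio 1))
    simpa using this
  have hd : ∀ x ∈ Ioo (0:ℝ) 1, HasDerivAt (fun r => 1 / (1 - Real.log r))
      (1 / (x * (1 - Real.log x) ^ 2)) x := fun x hx => rad_deriv x hx.1 hx.2
  have hI : IntegrableOn (fun r : ℝ => 1 / (r * (1 - Real.log r) ^ 2)) (Ioc 0 1) := by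
    refine intervalIntegral.integrableOn_deriv_of_nonneg
      (g := extendFrom (Ioo (0:ℝ) 1) (fun r => 1 / (1 - Real.log r))) ?_ ?_ ?_
    · exact continuousOn_Icc_extendFrom_Ioo
        (fun x hx => (hd x hx).continuousAt.continuousWithinAt) t0 t1
    · intro x hx
      refine (hd x hx).congr_of_eventuallyEq ?_
      filter_upwards [Ioo_mem_nhds hx.1 hx.2] with y hy
      exact extendFrom_eq (subset_closure hy) ((hd y hy).continuousAt.continuousWithinAt)
    · intro x hx
      have := hx.1
      positivity
  refine ⟨hI.mono_set Ioo_subset_Ioc_self, ?_⟩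
  rw [← integral_Ioc_eq_integral_Ioo, ← intervalIntegral.integral_of_le zero_le_one,
    intervalIntegral.integral_eq_sub_of_hasDerivAt_of_tendsto zero_lt_one hd
      ((intervalIntegrable_iff_integrableOn_Ioc_of_le zero_le_one).2 hI) t0 t1]
  simp

/-- the density -/
def DD (x : EuclideanSpace ℝ (Fin 2)) : ℝ := 1 / (‖x‖ ^ 2 * (1 - Real.log ‖x‖) ^ 2)

lemma DD_int : IntegrableOn DD (ball 0 1) := by
  have := (integrableOn_fun_norm_addHaar (E := EuclideanSpace ℝ (Fin 2)) volume
    (f := fun r : ℝ => 1 / (r ^ 2 * (1 - Real.log r) ^ 2)) (r := 1)).2 ?_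
  · exact this
  · refine rad_int.1.congr_fun ?_ measurableSet_Ioo
    intro r hr
    have := hr.1
    simp
    field_simp

lemma DD_integral : ∫ x in ball (0 : EuclideanSpace ℝ (Fin 2)) 1, DD x = 2 * Real.pi := by
  rw [← integral_indicator measurableSet_ball]
  have h := integral_fun_norm_addHaar (E := EuclideanSpace ℝ (Fin 2)) volume
    (fun r : ℝ => (Iio 1).indicator (fun r => 1 / (r ^ 2 * (1 - Real.log r) ^ 2)) r)
  have e1 : (fun x => (ball (0 : EuclideanSpace ℝ (Fin 2)) 1).indicator DD x) =
      fun x => (Iio 1).indicator (fun r => 1 / (r ^ 2 * (1 - Real.log r) ^ 2)) ‖x‖ := by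
    ext x
    simp [indicator, DD]
  rw [e1, h]
  have e2 : ∫ (y : ℝ) in Ioi 0, y ^ (Module.finrank ℝ (EuclideanSpace ℝ (Fin 2)) - 1) •
      (Iio 1).indicator (fun r => 1 / (r ^ 2 * (1 - Real.log r) ^ 2)) y = 1 := by
    refine Eq.trans ?_ rad_int.2
    rw [← Ioi_inter_Iio, ← setIntegral_indicator measurableSet_Iio]
    refine setIntegral_congr_fun measurableSet_Ioi ?_
    intro r hr
    have hr' : 0 < r := hr
    by_cases h1 : r < 1
    · simp [indicator, h1]
      field_simp
    · simp [indicator, h1]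
  rw [e2]
  simp [Measure.real, EuclideanSpace.volume_ball_fin_two, Real.pi_pos.le]


def VV (x : EuclideanSpace ℝ (Fin 2)) : ℝ := 1 - Real.log ‖x‖

def PP (i : Fin 2) (x : EuclideanSpace ℝ (Fin 2)) : ℝ := -(x i) / (‖x‖ ^ 2 * VV x)

lemma DD_eq (x : EuclideanSpace ℝ (Fin 2)) : DD x = 1 / (‖x‖ ^ 2 * VV x ^ 2) := rfl

lemma VV_ge {x : EuclideanSpace ℝ (Fin 2)} (hx : x ∈ ball (0 : EuclideanSpace ℝ (Fin 2)) 1) :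
    1 ≤ VV x := by
  have h1 : ‖x‖ < 1 := by simpa using hx
  have := Real.log_nonpos (norm_nonneg x) h1.le
  unfold VV; linarith

lemma VV_meas : Measurable VV := by
  unfold VV; fun_prop

lemma PP_meas (i : Fin 2) : Measurable (PP i) := by
  unfold PP
  have := VV_meas
  fun_prop

lemma DD_meas : Measurable DD := by
  unfold DD; fun_prop

lemma sq_sum (x : EuclideanSpace ℝ (Fin 2)) : x 0 ^ 2 + x 1 ^ 2 = ‖x‖ ^ 2 := by
  rw [EuclideanSpace.real_norm_sq_eq, Fin.sum_univ_two]

lemma coord_sq (x : EuclideanSpace ℝ (Fin 2)) (i : Fin 2) : x i ^ 2 ≤ ‖x‖ ^ 2 := by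
  rw [← sq_sum]
  fin_cases i <;> simp <;> positivity

lemma nsq_line (x : EuclideanSpace ℝ (Fin 2)) (i : Fin 2) :
    HasLineDerivAt ℝ (fun x : EuclideanSpace ℝ (Fin 2) => ‖x‖ ^ 2) (2 * x i) x
      (EuclideanSpace.single i 1) := by
  have h := (hasStrictFDerivAt_norm_sq x).hasFDerivAt.hasLineDerivAt (EuclideanSpace.single i (1:ℝ))
  simpa [EuclideanSpace.inner_single_right] using h

lemma coord_line (x : EuclideanSpace ℝ (Fin 2)) (i : Fin 2) :
    HasLineDerivAt ℝ (fun x : EuclideanSpace ℝ (Fin 2) => x i) 1 x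
      (EuclideanSpace.single i 1) := by
  have h := ContinuousLinearMap.hasFDerivAt (x := x) (EuclideanSpace.proj i : EuclideanSpace ℝ (Fin 2) →L[ℝ] ℝ)
  have h2 := h.hasLineDerivAt (EuclideanSpace.single i (1:ℝ))
  simpa using h2

lemma VV_line (x : EuclideanSpace ℝ (Fin 2)) (hx : x ≠ 0) (i : Fin 2) :
    HasLineDerivAt ℝ VV (-(x i) / ‖x‖ ^ 2) x (EuclideanSpace.single i 1) := by
  have h := nsq_line x i
  unfold HasLineDerivAt at *
  have hn : ‖x‖ ≠ 0 := norm_ne_zero_iff.2 hx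
  have h2 := ((h.log (by simpa using hx)).const_mul (1/2 : ℝ)).const_sub 1
  have h3 : -(1 / 2 * (2 * x i / ‖x + (0:ℝ) • EuclideanSpace.single i (1:ℝ)‖ ^ 2))
      = -(x i) / ‖x‖ ^ 2 := by
    rw [zero_smul, add_zero]; field_simp
  rw [h3] at h2
  refine h2.congr_of_eventuallyEq (Filter.Eventually.of_forall fun t => ?_)
  simp only [VV, Real.log_pow]
  push_cast; ring

lemma u_line (x : EuclideanSpace ℝ (Fin 2)) (hx : x ≠ 0)
    (hb : x ∈ ball (0 : EuclideanSpace ℝ (Fin 2)) 1) (i : Fin 2) :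
    HasLineDerivAt ℝ (fun x => Real.log (VV x)) (PP i x) x (EuclideanSpace.single i 1) := by
  have h := VV_line x hx i
  have hv := VV_ge hb
  unfold HasLineDerivAt at *
  have h2 := h.log (by simp; linarith)
  rw [zero_smul, add_zero, div_div] at h2
  exact h2

lemma pd_u (x : EuclideanSpace ℝ (Fin 2)) (hx : x ≠ 0)
    (hb : x ∈ ball (0 : EuclideanSpace ℝ (Fin 2)) 1) (i : Fin 2) :
    pd i (fun x => Real.log (VV x)) x = PP i x := by
  have hv := VV_ge hb
  have hd : DifferentiableAt ℝ (fun x => Real.log (VV x)) x := by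
    refine DifferentiableAt.log ?_ (by linarith)
    unfold VV
    refine DifferentiableAt.const_sub ?_ 1
    exact DifferentiableAt.log (differentiableAt_id.norm ℝ hx) (norm_ne_zero_iff.2 hx)
  rw [pd, ← hd.lineDeriv_eq_fderiv]
  exact (u_line x hx hb i).lineDeriv

lemma PP_sum (x : EuclideanSpace ℝ (Fin 2)) (hx : x ≠ 0)
    (hb : x ∈ ball (0 : EuclideanSpace ℝ (Fin 2)) 1) : ∑ i, PP i x ^ 2 = DD x := by
  have hv : VV x ≠ 0 := by linarith [VV_ge hb]
  have hn : ‖x‖ ≠ 0 := norm_ne_zero_iff.2 hx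
  rw [Fin.sum_univ_two, DD_eq]
  simp only [PP]
  field_simp
  linarith [sq_sum x]

lemma PP_sq (x : EuclideanSpace ℝ (Fin 2)) (hx : x ≠ 0)
    (hb : x ∈ ball (0 : EuclideanSpace ℝ (Fin 2)) 1) (i : Fin 2) : PP i x ^ 2 ≤ DD x := by
  rw [← PP_sum x hx hb]
  exact Finset.single_le_sum (f := fun i => PP i x ^ 2) (fun _ _ => sq_nonneg _) (Finset.mem_univ i)

lemma u_sq (x : EuclideanSpace ℝ (Fin 2)) (hx : x ≠ 0)
    (hb : x ∈ ball (0 : EuclideanSpace ℝ (Fin 2)) 1) : Real.log (VV x) ^ 2 ≤ 4 * DD x := by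
  have hv := VV_ge hb
  have hn : 0 < ‖x‖ := norm_pos_iff.2 hx
  set s := - Real.log ‖x‖ with hs
  have hr : ‖x‖ = Real.exp (-s) := by rw [hs, neg_neg, Real.exp_log hn]
  have hV : VV x = 1 + s := by simp [VV, hs, sub_eq_add_neg]
  have hs0 : 0 ≤ s := by linarith
  have h1 : Real.log (VV x) ≤ s := by
    have := Real.log_le_sub_one_of_pos (show 0 < VV x by linarith)
    linarith
  have h0 : 0 ≤ Real.log (VV x) := Real.log_nonneg hv
  have h2 := Real.quadratic_le_exp_of_nonneg hs0
  have h3 : ‖x‖ * VV x * Real.log (VV x) ≤ 2 := by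
    have : ‖x‖ * VV x * Real.log (VV x) ≤ Real.exp (-s) * (1 + s) * s := by
      rw [← hr, ← hV]; gcongr
    refine this.trans ?_
    rw [Real.exp_neg]
    have he := Real.exp_pos s
    rw [mul_assoc, inv_mul_le_iff₀ he]
    nlinarith
  have h4 : 0 ≤ ‖x‖ * VV x * Real.log (VV x) := by positivity
  have h5 : (‖x‖ * VV x * Real.log (VV x)) ^ 2 ≤ 4 := by nlinarith
  rw [DD_eq, mul_one_div, le_div_iff₀ (by positivity)]
  linarith [h5, show (‖x‖ * VV x * Real.log (VV x)) ^ 2 =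
    Real.log (VV x) ^ 2 * (‖x‖ ^ 2 * VV x ^ 2) by ring]

lemma ae_ne : ∀ᵐ x ∂((volume : Measure (EuclideanSpace ℝ (Fin 2))).restrict (ball 0 1)),
    x ≠ 0 ∧ x ∈ ball (0 : EuclideanSpace ℝ (Fin 2)) 1 := by
  have h1 : ∀ᵐ x ∂((volume : Measure (EuclideanSpace ℝ (Fin 2))).restrict (ball 0 1)), x ≠ 0 :=
    ae_restrict_of_ae (by simp [ae_iff])
  filter_upwards [h1, ae_restrict_mem measurableSet_ball] with x a b using ⟨a, b⟩

lemma one_int : IntegrableOn (fun x => 1 + 4 * DD x) (ball 0 1) :=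
  (integrableOn_const (C := (1:ℝ)) measure_ball_lt_top.ne).add (DD_int.const_mul 4)

lemma int_of_sq (f : EuclideanSpace ℝ (Fin 2) → ℝ) (hf : Measurable f)
    (h : ∀ x, x ≠ 0 → x ∈ ball (0 : EuclideanSpace ℝ (Fin 2)) 1 → f x ^ 2 ≤ 4 * DD x) :
    IntegrableOn f (ball 0 1) := by
  refine one_int.mono' hf.aestronglyMeasurable ?_
  filter_upwards [ae_ne] with x hx
  have := h x hx.1 hx.2
  rw [Real.norm_eq_abs]
  nlinarith [sq_abs (f x), sq_nonneg (|f x| - 1), abs_nonneg (f x)]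

lemma DD_nonneg (x) : 0 ≤ DD x := by unfold DD; positivity

lemma u_int : IntegrableOn (fun x => Real.log (VV x)) (ball 0 1) :=
  int_of_sq _ (Real.measurable_log.comp VV_meas) u_sq

lemma PP_int (i : Fin 2) : IntegrableOn (PP i) (ball 0 1) :=
  int_of_sq _ (PP_meas i) fun x h1 h2 => by linarith [PP_sq x h1 h2 i, DD_nonneg x]

def GG (a : ℝ) (i : Fin 2) (x : EuclideanSpace ℝ (Fin 2)) : ℝ := a / (a + VV x) * PP i x

def GG' (a : ℝ) (i : Fin 2) (x : EuclideanSpace ℝ (Fin 2)) : ℝ :=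
  a * (- (1 / ((a + VV x) * VV x * ‖x‖ ^ 2))
    - x i ^ 2 / (‖x‖ ^ 2 * ‖x‖ ^ 2 * ((a + VV x) ^ 2 * VV x))
    - x i ^ 2 / (‖x‖ ^ 2 * ‖x‖ ^ 2 * ((a + VV x) * VV x ^ 2))
    + 2 * (x i ^ 2 / (‖x‖ ^ 2 * ‖x‖ ^ 2 * ((a + VV x) * VV x))))

lemma GG_line (a : ℝ) (ha : 0 < a) (x : EuclideanSpace ℝ (Fin 2)) (hx : x ≠ 0)
    (hb : x ∈ ball (0 : EuclideanSpace ℝ (Fin 2)) 1) (i : Fin 2) :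
    HasLineDerivAt ℝ (GG a i) (GG' a i x) x (EuclideanSpace.single i 1) := by
  have hV := VV_line x hx i
  have hN := nsq_line x i
  have hC := coord_line x i
  have hv := VV_ge hb
  have hn : ‖x‖ ≠ 0 := norm_ne_zero_iff.2 hx
  have e1 : a + VV x ≠ 0 := by linarith
  have e2 : VV x ≠ 0 := by linarith
  unfold HasLineDerivAt at *
  have h := (HasDerivAt.fun_div (hasDerivAt_const (0:ℝ) a) (hV.const_add a) (by simpa using e1)).fun_mul
    (HasDerivAt.fun_div hC.fun_neg (HasDerivAt.fun_mul hN hV) (by simp [hx, e2]))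
  simp only [zero_smul, add_zero] at h
  have e3 : GG' a i x = (0 * (a + VV x) - a * (-x i / ‖x‖ ^ 2)) / (a + VV x) ^ 2 *
      (-x i / (‖x‖ ^ 2 * VV x)) + a / (a + VV x) *
      ((-1 * (‖x‖ ^ 2 * VV x) - -x i * (2 * x i * VV x + ‖x‖ ^ 2 * (-x i / ‖x‖ ^ 2))) /
        (‖x‖ ^ 2 * VV x) ^ 2) := by
    unfold GG'
    field_simp
    ring
  rw [e3]
  exact h

lemma GG'_bound (a : ℝ) (ha : 0 < a) (x : EuclideanSpace ℝ (Fin 2)) (hx : x ≠ 0)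
    (hb : x ∈ ball (0 : EuclideanSpace ℝ (Fin 2)) 1) (i : Fin 2) :
    |GG' a i x| ≤ 5 * a * DD x := by
  have hv := VV_ge hb
  have hv0 : 0 < VV x := by linarith
  have hn : 0 < ‖x‖ := norm_pos_iff.2 hx
  have hc := coord_sq x i
  have b1 : 1 / ((a + VV x) * VV x * ‖x‖ ^ 2) ≤ DD x := by
    rw [DD_eq]
    apply one_div_le_one_div_of_le (by positivity)
    nlinarith [mul_pos (mul_pos ha hv0) (pow_pos hn 2)]
  have key : ∀ k : ℝ, VV x ^ 2 ≤ k → x i ^ 2 / (‖x‖ ^ 2 * ‖x‖ ^ 2 * k) ≤ DD x := by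
    intro k hk
    have hk0 : 0 < k := lt_of_lt_of_le (by positivity) hk
    calc x i ^ 2 / (‖x‖ ^ 2 * ‖x‖ ^ 2 * k) ≤ ‖x‖ ^ 2 / (‖x‖ ^ 2 * ‖x‖ ^ 2 * k) := by gcongr
      _ = 1 / (‖x‖ ^ 2 * k) := by field_simp
      _ ≤ DD x := by rw [DD_eq]; gcongr
  have b2 := key ((a + VV x) ^ 2 * VV x) (by
    have : VV x ^ 2 ≤ (a + VV x) ^ 2 := by gcongr; linarith
    nlinarith [sq_nonneg (a + VV x)])
  have b3 := key ((a + VV x) * VV x ^ 2) (by nlinarith [sq_nonneg (VV x)])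
  have b4 := key ((a + VV x) * VV x) (by nlinarith)
  have p1 : 0 ≤ 1 / ((a + VV x) * VV x * ‖x‖ ^ 2) := by positivity
  have p2 : 0 ≤ x i ^ 2 / (‖x‖ ^ 2 * ‖x‖ ^ 2 * ((a + VV x) ^ 2 * VV x)) := by positivity
  have p3 : 0 ≤ x i ^ 2 / (‖x‖ ^ 2 * ‖x‖ ^ 2 * ((a + VV x) * VV x ^ 2)) := by positivity
  have p4 : 0 ≤ x i ^ 2 / (‖x‖ ^ 2 * ‖x‖ ^ 2 * ((a + VV x) * VV x)) := by positivity
  unfold GG'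
  rw [abs_mul, abs_of_pos ha, mul_comm (5:ℝ) a, mul_assoc a 5]
  refine mul_le_mul_of_nonneg_left ?_ ha.le
  rw [abs_le]
  constructor <;> linarith

lemma GG'_sum (a : ℝ) (ha : 0 < a) (x : EuclideanSpace ℝ (Fin 2)) (hx : x ≠ 0)
    (hb : x ∈ ball (0 : EuclideanSpace ℝ (Fin 2)) 1) :
    GG' a 0 x + GG' a 1 x = -(a / (a + VV x) + a * VV x / (a + VV x) ^ 2) * DD x := by
  have hv := VV_ge hb
  have hv0 : 0 < VV x := by linarith
  have hn : 0 < ‖x‖ := norm_pos_iff.2 hx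
  have h1 : x 1 ^ 2 = ‖x‖ ^ 2 - x 0 ^ 2 := by linarith [sq_sum x]
  rw [DD_eq]
  unfold GG'
  rw [h1]
  field_simp
  ring

lemma GG_int (a : ℝ) (ha : 0 < a) (i : Fin 2) : IntegrableOn (GG a i) (ball 0 1) := by
  have m := VV_meas
  have mp := PP_meas i
  refine (PP_int i).bdd_mul (c := 1) (Measurable.aestronglyMeasurable (by fun_prop)) ?_
  filter_upwards [ae_ne] with x hx
  have hv := VV_ge hx.2
  rw [Real.norm_eq_abs, abs_of_nonneg (by positivity), div_le_one (by positivity)]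
  linarith

lemma GG'_int (a : ℝ) (ha : 0 < a) (i : Fin 2) : IntegrableOn (GG' a i) (ball 0 1) := by
  have m := VV_meas
  refine (DD_int.const_mul (5 * a)).mono' (Measurable.aestronglyMeasurable ?_) ?_
  · unfold GG'
    fun_prop
  filter_upwards [ae_ne] with x hx
  exact GG'_bound a ha x hx.1 hx.2 i


lemma dist_eq (φ : EuclideanSpace ℝ (Fin 2) → ℝ) (hφ : ContDiff ℝ (⊤ : ℕ∞) φ)
    (hc : HasCompactSupport φ) (hs : tsupport φ ⊆ ball (0 : EuclideanSpace ℝ (Fin 2)) 1) :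
    (∫ x in ball (0 : EuclideanSpace ℝ (Fin 2)) 1,
      ((∑ i, PP i x * pd i φ x) - DD x * φ x)) = 0 := by
  have hP : ∀ i, IntegrableOn (fun x => PP i x * pd i φ x) (ball 0 1) := fun i =>
    by
      have hdc : Continuous (pd i φ) := by
        unfold pd
        exact (hφ.continuous_fderiv (by simp)).clm_apply continuous_const
      have hpc : HasCompactSupport (pd i φ) := hc.fderiv_apply (𝕜 := ℝ) _
      obtain ⟨C', hC'⟩ := hpc.exists_bound_of_continuous hdc
      exact Integrable.mul_bdd (PP_int i) hdc.aestronglyMeasurable (Filter.Eventually.of_forall hC')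
  have hD : IntegrableOn (fun x => DD x * φ x) (ball 0 1) := by
    obtain ⟨C, hC⟩ := hc.exists_bound_of_continuous hφ.continuous
    exact Integrable.mul_bdd DD_int hφ.continuous.aestronglyMeasurable
      (Filter.Eventually.of_forall hC)
  let F : ℕ → EuclideanSpace ℝ (Fin 2) → ℝ := fun n x =>
    (GG' (n + 1) 0 x * φ x + GG (n + 1) 0 x * pd 0 φ x) +
      (GG' (n + 1) 1 x * φ x + GG (n + 1) 1 x * pd 1 φ x)
  have hw : ∀ (n : ℕ) (i : Fin 2), _ := fun n i =>
    weak_ibp (GG (n + 1) i) (GG' (n + 1) i) i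
      (fun x hb hx => GG_line (n + 1) (by positivity) x hx hb i)
      (GG_int (n + 1) (by positivity) i) (GG'_int (n + 1) (by positivity) i) φ hφ hc hs
  have hFi : ∀ n, IntegrableOn (F n) (ball 0 1) := fun n =>
    ((hw n 0).1.add (hw n 0).2.1).add ((hw n 1).1.add (hw n 1).2.1)
  have hF0 : ∀ n, ∫ x in ball (0 : EuclideanSpace ℝ (Fin 2)) 1, F n x = 0 := by
    intro n
    have h := integral_add ((hw n 0).1.add (hw n 0).2.1) ((hw n 1).1.add (hw n 1).2.1)
    refine h.trans ?_
    have h0 := (hw n 0).2.2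
    have h1 := (hw n 1).2.2
    refine (congrArg₂ (· + ·) h0 h1).trans (add_zero 0)
  have hFe : ∀ n x, x ≠ 0 → x ∈ ball (0 : EuclideanSpace ℝ (Fin 2)) 1 →
      F n x = ((n:ℝ) + 1) / (n + 1 + VV x) * (PP 0 x * pd 0 φ x + PP 1 x * pd 1 φ x)
        - (((n:ℝ) + 1) / (n + 1 + VV x) + ((n:ℝ) + 1) / (n + 1 + VV x) *
          (VV x / (n + 1 + VV x))) * (DD x * φ x) := by
    intro n x hx hb
    have h := GG'_sum (n + 1) (by positivity) x hx hb
    have hv := VV_ge hb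
    have h1 : F n x = (GG' (n + 1) 0 x + GG' (n + 1) 1 x) * φ x +
      (GG (n + 1) 0 x * pd 0 φ x + GG (n + 1) 1 x * pd 1 φ x) := by simp only [F]; ring
    rw [h1, h]
    simp only [GG]
    have : (n:ℝ) + 1 + VV x ≠ 0 := by positivity
    field_simp
    ring
  have lim := tendsto_integral_of_dominated_convergence
    (μ := (volume : Measure (EuclideanSpace ℝ (Fin 2))).restrict (ball 0 1))
    (F := F) (f := fun x => (∑ i, PP i x * pd i φ x) - DD x * φ x)
    (fun x => |PP 0 x * pd 0 φ x| + |PP 1 x * pd 1 φ x| + 2 * |DD x * φ x|)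
    (fun n => (hFi n).aestronglyMeasurable)
    (((hP 0).abs.add (hP 1).abs).add (hD.abs.const_mul 2)) ?_ ?_
  · simp only [hF0] at lim
    exact (tendsto_nhds_unique lim tendsto_const_nhds)
  · intro n
    filter_upwards [ae_ne] with x hx
    rw [hFe n x hx.1 hx.2, Real.norm_eq_abs]
    have hv := VV_ge hx.2
    have hp : 0 < (n:ℝ) + 1 + VV x := by positivity
    have w0 : 0 ≤ ((n:ℝ) + 1) / (n + 1 + VV x) := by positivity
    have w1 : ((n:ℝ) + 1) / (n + 1 + VV x) ≤ 1 := by rw [div_le_one hp]; linarith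
    have q0 : 0 ≤ VV x / (n + 1 + VV x) := by positivity
    have q1 : VV x / (n + 1 + VV x) ≤ 1 := by rw [div_le_one hp]; linarith
    generalize ((n:ℝ) + 1) / (n + 1 + VV x) = w at *
    generalize VV x / (n + 1 + VV x) = q at *
    have wq0 : 0 ≤ w * q := mul_nonneg w0 q0
    have wq1 : w * q ≤ 1 := mul_le_one₀ w1 q0 q1
    refine (abs_sub _ _).trans ?_
    rw [abs_mul, abs_mul, abs_of_nonneg w0, abs_of_nonneg (add_nonneg w0 wq0)]
    refine add_le_add ?_ ?_
    · exact (mul_le_of_le_one_left (abs_nonneg _) w1).trans (abs_add_le _ _)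
    · exact mul_le_mul_of_nonneg_right (by linarith) (abs_nonneg _)
  · filter_upwards [ae_ne] with x hx
    have hv := VV_ge hx.2
    have l0 : Filter.Tendsto (fun n : ℕ => (n:ℝ) + 1 + VV x) Filter.atTop Filter.atTop :=
      Filter.tendsto_atTop_add_const_right _ _
        (Filter.tendsto_atTop_add_const_right _ _ tendsto_natCast_atTop_atTop)
    have l1 : Filter.Tendsto (fun n : ℕ => VV x / ((n:ℝ) + 1 + VV x)) Filter.atTop (nhds 0) :=
      l0.const_div_atTop _
    have l2 : Filter.Tendsto (fun n : ℕ => ((n:ℝ) + 1) / ((n:ℝ) + 1 + VV x)) Filter.atTop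
        (nhds 1) := by
      have := l1.const_sub 1
      rw [sub_zero] at this
      refine this.congr fun n => ?_
      have : (n:ℝ) + 1 + VV x ≠ 0 := by positivity
      field_simp
      ring
    have l3 := (l2.mul_const (PP 0 x * pd 0 φ x + PP 1 x * pd 1 φ x)).sub
      ((l2.add (l2.mul l1)).mul_const (DD x * φ x))
    rw [Fin.sum_univ_two]
    have e : 1 * (PP 0 x * pd 0 φ x + PP 1 x * pd 1 φ x) - (1 + 1 * 0) * (DD x * φ x) =
      PP 0 x * pd 0 φ x + PP 1 x * pd 1 φ x - DD x * φ x := by ring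
    rw [e] at l3
    exact l3.congr fun n => (hFe n x hx.1 hx.2).symm

lemma prod_int (f : EuclideanSpace ℝ (Fin 2) → ℝ) (hf : IntegrableOn f (ball 0 1))
    (c : ℝ × EuclideanSpace ℝ (Fin 2) → ℝ) (hc : Continuous c) (hs : HasCompactSupport c) :
    Integrable (fun z : ℝ × EuclideanSpace ℝ (Fin 2) => f z.2 * c z)
      (((volume : Measure ℝ).restrict (Ioi 0)).prod
        ((volume : Measure (EuclideanSpace ℝ (Fin 2))).restrict (ball 0 1))) := by
  obtain ⟨C, hC⟩ := hs.exists_bound_of_continuous hc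
  let K := Prod.fst '' tsupport c
  have hK : IsCompact K := hs.isCompact.image continuous_fst
  have h1 : Integrable (K.indicator (fun _ => (1:ℝ))) ((volume : Measure ℝ).restrict (Ioi 0)) :=
    ((integrable_indicator_iff hK.measurableSet).2
      (integrableOn_const hK.measure_lt_top.ne)).restrict
  have h2 := (h1.mul_prod hf).mul_bdd (c := C) hc.aestronglyMeasurable
    (Filter.Eventually.of_forall hC)
  refine h2.congr (Filter.Eventually.of_forall fun z => ?_)
  by_cases hz : z ∈ tsupport c
  · have : z.1 ∈ K := ⟨z, hz, rfl⟩
    simp [this]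
  · simp [image_eq_zero_of_notMem_tsupport hz]

lemma time_eq (ψ : ℝ × EuclideanSpace ℝ (Fin 2) → ℝ) (hψ : ContDiff ℝ (⊤ : ℕ∞) ψ)
    (hc : HasCompactSupport ψ)
    (hs : tsupport ψ ⊆ Ioi (0:ℝ) ×ˢ ball (0 : EuclideanSpace ℝ (Fin 2)) 1) :
    (∫ z in Ioi (0:ℝ) ×ˢ ball (0 : EuclideanSpace ℝ (Fin 2)) 1,
      (-(Real.log (VV z.2) * pT ψ z) + (∑ i, PP i z.2 * pd i (fun y => ψ (z.1, y)) z.2)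
            - DD z.2 * ψ z)) = 0 := by
  have hdiff : Differentiable ℝ ψ := hψ.differentiable (by simp)
  have hfc : Continuous (fderiv ℝ ψ) := hψ.continuous_fderiv (by simp)
  have hT : ∀ z, HasDerivAt (fun s => ψ (s, z.2)) (fderiv ℝ ψ z (1, 0)) z.1 := by
    intro z
    exact (hdiff z).hasFDerivAt.comp_hasDerivAt z.1
      (f := fun s => (s, z.2)) ((hasDerivAt_id z.1).prodMk (hasDerivAt_const z.1 z.2))
  have hTe : pT ψ = fun z => fderiv ℝ ψ z (1, 0) := by
    ext z; exact (hT z).deriv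
  have hXe : ∀ (i : Fin 2) (z : ℝ × EuclideanSpace ℝ (Fin 2)),
      pd i (fun y => ψ (z.1, y)) z.2 = fderiv ℝ ψ z (0, EuclideanSpace.single i 1) := by
    intro i z
    have h := (hdiff z).hasFDerivAt.comp z.2
      (f := fun y => (z.1, y)) ((hasFDerivAt_const z.1 z.2).prodMk (hasFDerivAt_id z.2))
    have h2 : HasFDerivAt (fun y => ψ (z.1, y)) _ z.2 := h
    rw [pd, h2.fderiv]
    simp
  have hTc : Continuous (pT ψ) := by rw [hTe]; exact hfc.clm_apply continuous_const
  have hTs : HasCompactSupport (pT ψ) := by rw [hTe]; exact hc.fderiv_apply (𝕜 := ℝ) _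
  have iA := prod_int _ u_int _ hTc hTs
  have iX : ∀ i : Fin 2, _ := fun i => prod_int _ (PP_int i)
    (fun z => pd i (fun y => ψ (z.1, y)) z.2)
    (by simp only [hXe]; exact hfc.clm_apply continuous_const)
    (by simp only [hXe]; exact hc.fderiv_apply (𝕜 := ℝ) _)
  have iD := prod_int _ DD_int _ hψ.continuous hc
  have iB := (integrable_finsetSum Finset.univ (fun i _ => iX i)).sub iD
  rw [Measure.volume_eq_prod, ← Measure.prod_restrict]
  have e : ∀ z : ℝ × EuclideanSpace ℝ (Fin 2),
    (-(Real.log (VV z.2) * pT ψ z) + (∑ i, PP i z.2 * pd i (fun y => ψ (z.1, y)) z.2)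
            - DD z.2 * ψ z) = -(Real.log (VV z.2) * pT ψ z) +
      ((∑ i, PP i z.2 * pd i (fun y => ψ (z.1, y)) z.2) - DD z.2 * ψ z) := fun z => by ring
  simp only [e]
  have iB' : Integrable (fun z : ℝ × EuclideanSpace ℝ (Fin 2) =>
      (∑ i, PP i z.2 * pd i (fun y => ψ (z.1, y)) z.2) - DD z.2 * ψ z)
      (((volume : Measure ℝ).restrict (Ioi 0)).prod
        ((volume : Measure (EuclideanSpace ℝ (Fin 2))).restrict (ball 0 1))) := iB
  have iA' : Integrable (fun z : ℝ × EuclideanSpace ℝ (Fin 2) => -(Real.log (VV z.2) * pT ψ z))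
      (((volume : Measure ℝ).restrict (Ioi 0)).prod
        ((volume : Measure (EuclideanSpace ℝ (Fin 2))).restrict (ball 0 1))) := iA.neg
  rw [integral_add iA' iB', integral_neg, integral_prod_symm _ iA, integral_prod _ iB']
  have z1 : ∀ y, ∫ t in Ioi (0:ℝ), Real.log (VV y) * pT ψ (t, y) = 0 := by
    intro y
    rw [integral_const_mul]
    have hsl : Continuous (fun t : ℝ => (t, y)) := by fun_prop
    have hz : ∀ t, t ∉ Ioi (0:ℝ) → pT ψ (t, y) = 0 := by
      intro t ht
      have hn : (t, y) ∉ tsupport ψ := fun h' => ht (hs h').1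
      have : fderiv ℝ ψ (t, y) = 0 :=
        image_eq_zero_of_notMem_tsupport fun h' => hn (tsupport_fderiv_subset ℝ h')
      simp [hTe, this]
    rw [setIntegral_eq_integral_of_forall_compl_eq_zero hz]
    have cs : ∀ c : ℝ × EuclideanSpace ℝ (Fin 2) → ℝ, HasCompactSupport c →
        HasCompactSupport (fun t => c (t, y)) := by
      intro c hc'
      refine HasCompactSupport.intro (hc'.isCompact.image continuous_fst) fun t ht => ?_
      apply image_eq_zero_of_notMem_tsupport
      exact fun h' => ht ⟨_, h', rfl⟩
    rw [integral_eq_zero_of_hasDerivAt_of_integrable (f := fun t => ψ (t, y)), mul_zero]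
    · intro t
      have := hT (t, y)
      simpa [hTe] using this
    · exact (hTc.comp hsl).integrable_of_hasCompactSupport (cs _ hTs)
    · exact (hψ.continuous.comp hsl).integrable_of_hasCompactSupport (cs _ hc)
  have z2 : ∀ t, ∫ y in ball (0 : EuclideanSpace ℝ (Fin 2)) 1,
      ((∑ i, PP i y * pd i (fun y => ψ (t, y)) y) - DD y * ψ (t, y)) = 0 := by
    intro t
    have hsl : ContDiff ℝ (⊤ : ℕ∞) (fun y : EuclideanSpace ℝ (Fin 2) => (t, y)) :=
      contDiff_const.prodMk contDiff_id
    have hsub := tsupport_comp_subset_preimage ψ hsl.continuous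
    refine dist_eq (fun y => ψ (t, y)) (hψ.comp hsl) ?_ ?_
    · refine HasCompactSupport.intro (hc.isCompact.image continuous_snd) fun y hy => ?_
      apply image_eq_zero_of_notMem_tsupport
      exact fun h' => hy ⟨_, h', rfl⟩
    · intro y hy
      exact (hs (hsub hy)).2
  simp only [z1, z2]
  simp

/-- `u₀(x) = ln(1 − ln|x|)` belongs to `W^{1,2}(B₁(0)) ⊂ ℝ²`, with
`∫_{B₁} |∇u₀|² = 2π`, it satisfies `−Δu₀ = |∇u₀|²` distributionally on the whole
disk, and hence `u(t,x) = u₀(x)` is a stationary weak solution of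
`∂ₜu − Δu = |∇u|²` on `(0,∞) × B₁(0)`. -/
theorem statement_16
    (u₀ : EuclideanSpace ℝ (Fin 2) → ℝ)
    (hu₀ : ∀ x, u₀ x = Real.log (1 - Real.log ‖x‖)) :
    -- u₀ ∈ W^{1,2}(B₁(0))
    IntegrableOn (fun x => (u₀ x) ^ 2) (ball (0 : EuclideanSpace ℝ (Fin 2)) 1) ∧
    IntegrableOn (fun x => ∑ i, (pd i u₀ x) ^ 2)
      (ball (0 : EuclideanSpace ℝ (Fin 2)) 1) ∧
    -- the pointwise partial derivatives are the weak derivatives on the ball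
    (∀ φ : EuclideanSpace ℝ (Fin 2) → ℝ, ContDiff ℝ (⊤ : ℕ∞) φ →
      HasCompactSupport φ →
      tsupport φ ⊆ ball (0 : EuclideanSpace ℝ (Fin 2)) 1 →
      ∀ i : Fin 2,
        (∫ x in ball (0 : EuclideanSpace ℝ (Fin 2)) 1, u₀ x * pd i φ x) =
          -∫ x in ball (0 : EuclideanSpace ℝ (Fin 2)) 1, pd i u₀ x * φ x) ∧
    -- energy identity
    (∫ x in ball (0 : EuclideanSpace ℝ (Fin 2)) 1, ∑ i, (pd i u₀ x) ^ 2) =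
      2 * Real.pi ∧
    -- −Δu₀ = |∇u₀|² distributionally on the whole disk
    (∀ φ : EuclideanSpace ℝ (Fin 2) → ℝ, ContDiff ℝ (⊤ : ℕ∞) φ →
      HasCompactSupport φ →
      tsupport φ ⊆ ball (0 : EuclideanSpace ℝ (Fin 2)) 1 →
      (∫ x in ball (0 : EuclideanSpace ℝ (Fin 2)) 1,
          ∑ i, pd i u₀ x * pd i φ x) =
        ∫ x in ball (0 : EuclideanSpace ℝ (Fin 2)) 1,
          (∑ i, (pd i u₀ x) ^ 2) * φ x) ∧
    -- consequently, u(t,x) = u₀(x) is a stationary weak solution of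
    -- ∂ₜu − Δu = |∇u|² on (0,∞) × B₁(0)
    (∀ ψ : ℝ × EuclideanSpace ℝ (Fin 2) → ℝ, ContDiff ℝ (⊤ : ℕ∞) ψ →
      HasCompactSupport ψ →
      tsupport ψ ⊆ Ioi (0:ℝ) ×ˢ ball (0 : EuclideanSpace ℝ (Fin 2)) 1 →
      (∫ z in Ioi (0:ℝ) ×ˢ ball (0 : EuclideanSpace ℝ (Fin 2)) 1,
          (-(u₀ z.2 * pT ψ z) + (∑ i, pd i u₀ z.2 * pd i (fun y => ψ (z.1, y)) z.2)
            - (∑ i, (pd i u₀ z.2) ^ 2) * ψ z)) = 0) := by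
  obtain rfl : u₀ = fun x => Real.log (VV x) := funext hu₀
  have hpd : ∀ᵐ x ∂((volume : Measure (EuclideanSpace ℝ (Fin 2))).restrict (ball 0 1)),
      ∀ i, pd i (fun x => Real.log (VV x)) x = PP i x := by
    filter_upwards [ae_ne] with x hx i using pd_u x hx.1 hx.2 i
  have hsum : ∀ᵐ x ∂((volume : Measure (EuclideanSpace ℝ (Fin 2))).restrict (ball 0 1)),
      ∑ i, (pd i (fun x => Real.log (VV x)) x) ^ 2 = DD x := by
    filter_upwards [ae_ne, hpd] with x hx h
    simp only [h]
    exact PP_sum x hx.1 hx.2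
  refine ⟨?_, ?_, ?_, ?_, ?_, ?_⟩
  · refine (DD_int.const_mul 4).mono'
      ((Real.measurable_log.comp VV_meas).pow_const 2).aestronglyMeasurable ?_
    filter_upwards [ae_ne] with x hx
    rw [Real.norm_eq_abs, abs_of_nonneg (sq_nonneg _)]
    exact u_sq x hx.1 hx.2
  · exact DD_int.congr (by filter_upwards [hsum] with x hx using hx.symm)
  · intro φ hφ hc hs i
    obtain ⟨h1, h2, h3⟩ :=
      weak_ibp _ _ i (fun x hb hx => u_line x hx hb i) u_int (PP_int i) φ hφ hc hs
    rw [integral_add h1 h2] at h3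
    have h4 : ∫ x in ball (0 : EuclideanSpace ℝ (Fin 2)) 1,
        pd i (fun x => Real.log (VV x)) x * φ x =
        ∫ x in ball (0 : EuclideanSpace ℝ (Fin 2)) 1, PP i x * φ x :=
      integral_congr_ae (by filter_upwards [hpd] with x hx; rw [hx])
    rw [h4]
    linarith
  · rw [integral_congr_ae hsum, DD_integral]
  · intro φ hφ hc hs
    have h := dist_eq φ hφ hc hs
    have hP : ∀ i, IntegrableOn (fun x => PP i x * pd i φ x) (ball 0 1) := fun i => by
      have hdc : Continuous (pd i φ) := by
        unfold pd
        exact (hφ.continuous_fderiv (by simp)).clm_apply continuous_const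
      have hpc : HasCompactSupport (pd i φ) := hc.fderiv_apply (𝕜 := ℝ) _
      obtain ⟨C', hC'⟩ := hpc.exists_bound_of_continuous hdc
      exact Integrable.mul_bdd (PP_int i) hdc.aestronglyMeasurable (Filter.Eventually.of_forall hC')
    have hD : IntegrableOn (fun x => DD x * φ x) (ball 0 1) := by
      obtain ⟨C, hC⟩ := hc.exists_bound_of_continuous hφ.continuous
      exact Integrable.mul_bdd DD_int hφ.continuous.aestronglyMeasurable
        (Filter.Eventually.of_forall hC)
    rw [integral_sub (integrable_finsetSum Finset.univ (fun i _ => hP i)) hD] at h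
    have h4 : ∫ x in ball (0 : EuclideanSpace ℝ (Fin 2)) 1,
        ∑ i, pd i (fun x => Real.log (VV x)) x * pd i φ x =
        ∫ x in ball (0 : EuclideanSpace ℝ (Fin 2)) 1, ∑ i, PP i x * pd i φ x :=
      integral_congr_ae (by filter_upwards [hpd] with x hx; simp only [hx])
    have h5 : ∫ x in ball (0 : EuclideanSpace ℝ (Fin 2)) 1,
        (∑ i, (pd i (fun x => Real.log (VV x)) x) ^ 2) * φ x =
        ∫ x in ball (0 : EuclideanSpace ℝ (Fin 2)) 1, DD x * φ x :=
      integral_congr_ae (by filter_upwards [hsum] with x hx; rw [hx])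
    rw [h4, h5]
    linarith
  · intro ψ hψ hc hs
    refine Eq.trans ?_ (time_eq ψ hψ hc hs)
    apply integral_congr_ae
    rw [Measure.volume_eq_prod, ← Measure.prod_restrict]
    have q := Measure.quasiMeasurePreserving_snd
      (μ := (volume : Measure ℝ).restrict (Ioi 0))
      (ν := (volume : Measure (EuclideanSpace ℝ (Fin 2))).restrict (ball 0 1))
    filter_upwards [q.ae hpd, q.ae hsum] with z h1 h2
    rw [h2]
    simp only [h1]
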